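/- Let G be a graph, k>0 a natural number, and α a basic k-cover of G. If r is the number of distinct values that α takes which are at most k/2, i.e. r = |{α(v) : v∈V and α(v)≤k/2}|, then G has a free parameter set of cardinality r; in particular gdim(G) ≥ r+1. -/

import Mathlib

/-- A `k`-cover of a graph `G`. -/
def IsCover {n : ℕ} (G : SimpleGraph (Fin n)) (k : ℕ) (α : Fin n → ℕ) : Prop :=
  ∀ ⦃i j : Fin n⦄, G.Adj i j → k ≤ α i + α j

/-- A basic `k`-cover. -/
def IsBasicCover {n : ℕ} (G : SimpleGraph (Fin n)) (k : ℕ) (α : Fin n → ℕ) : Prop :=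
  IsCover G k α ∧ ∀ β : Fin n → ℕ, β ≤ α → IsCover G k β → β = α

/-- A free parameter pair. -/
def IsFreeParameterPair {n r : ℕ} (G : SimpleGraph (Fin n)) (a b : Fin r → Fin n) : Prop :=
  Function.Injective a ∧ Function.Injective b ∧
  (∀ i j : Fin r, ¬ G.Adj (a i) (a j)) ∧
  (∀ i j : Fin r, a i ≠ b j) ∧
  (∀ i : Fin r, G.Adj (a i) (b i)) ∧
  (∀ i j : Fin r, G.Adj (a i) (b j) → i ≤ j)

/-- `G` has a free parameter set of cardinality `r`. -/
def HasFreeParameterSet {n : ℕ} (G : SimpleGraph (Fin n)) (r : ℕ) : Prop :=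
  ∃ a b : Fin r → Fin n, IsFreeParameterPair G a b

/-- The graphical dimension. -/
noncomputable def gdim {n : ℕ} (G : SimpleGraph (Fin n)) : ℕ :=
  sSup {r : ℕ | HasFreeParameterSet G r} + 1

/-- A vertex of positive value in a basic cover lies on a tight edge. -/
theorem IsBasicCover.exists_tight_of_pos {n k : ℕ} {G : SimpleGraph (Fin n)} {α : Fin n → ℕ}
    (hα : IsBasicCover G k α) {v : Fin n} (hv : 0 < α v) :
    ∃ w, G.Adj v w ∧ α v + α w = k := by
  by_contra! h
  have hlt : ∀ w, G.Adj v w → k < α v + α w := fun w hw =>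
    lt_of_le_of_ne (hα.1 hw) (h w hw).symm
  have heq := hα.2 (Function.update α v (α v - 1)) (by
    intro i
    by_cases hi : i = v
    · subst hi; simp
    · simp [hi]) (by
    intro i j hij
    by_cases hi : i = v
    · subst hi
      have hj : j ≠ i := hij.ne'
      have := hlt j hij
      simp only [Function.update_self, Function.update_of_ne hj]
      omega
    · by_cases hj : j = v
      · subst hj
        have := hlt i hij.symm
        simp only [Function.update_self, Function.update_of_ne hi]
        omega
      · simpa [hi, hj] using hα.1 hij)
  have := congrFun heq v
  simp only [Function.update_self] at this
  omega

theorem IsBasicCover.le {n k : ℕ} {G : SimpleGraph (Fin n)} {α : Fin n → ℕ}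
    (hα : IsBasicCover G k α) (v : Fin n) : α v ≤ k := by
  rcases Nat.eq_zero_or_pos (α v) with h | h
  · omega
  · obtain ⟨w, -, hw⟩ := hα.exists_tight_of_pos h
    omega

/-- Every non-isolated vertex lies on a tight edge of a basic cover. -/
theorem IsBasicCover.exists_tight {n k : ℕ} {G : SimpleGraph (Fin n)} {α : Fin n → ℕ}
    (hα : IsBasicCover G k α) {v : Fin n} (hv : ∃ w, G.Adj v w) :
    ∃ w, G.Adj v w ∧ α v + α w = k := by
  rcases Nat.eq_zero_or_pos (α v) with h | h
  · obtain ⟨w, hw⟩ := hv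
    have := hα.1 hw
    have := hα.le w
    exact ⟨w, hw, by omega⟩
  · exact hα.exists_tight_of_pos h

theorem bddAbove_hasFreeParameterSet {n : ℕ} (G : SimpleGraph (Fin n)) :
    BddAbove {r : ℕ | HasFreeParameterSet G r} := by
  refine ⟨n, ?_⟩
  rintro r ⟨a, b, ha, -⟩
  simpa using Fintype.card_le_of_injective a ha

/-- Tight edges whose first endpoints carry strictly decreasing values at most `k / 2` form a
free parameter pair. -/
theorem IsCover.isFreeParameterPair {n k r : ℕ} {G : SimpleGraph (Fin n)} {α : Fin n → ℕ}
    (hα : IsCover G k α) {a b : Fin r → Fin n} (hanti : StrictAnti (α ∘ a))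
    (hle : ∀ i, 2 * α (a i) ≤ k) (hadj : ∀ i, G.Adj (a i) (b i))
    (htight : ∀ i, α (a i) + α (b i) = k) : IsFreeParameterPair G a b := by
  have hinj : ∀ {i j}, α (a i) = α (a j) → i = j := fun h => hanti.injective h
  refine ⟨fun i j h => hinj (congrArg α h), fun i j h => hinj ?_, fun i j h => ?_,
    fun i j h => ?_, hadj, fun i j h => ?_⟩
  · have := htight i
    have := htight j
    rw [h] at *
    omega
  · have := hα h
    have := hle i
    have := hle j
    obtain rfl : i = j := hinj (by omega)
    exact G.irrefl h
  · have := htight j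
    have := hle i
    have := hle j
    have := congrArg α h
    obtain rfl : i = j := hinj (by omega)
    exact (hadj i).ne h
  · have := hα h
    have := htight j
    exact hanti.le_iff_ge.mp (show α (a j) ≤ α (a i) by omega)

/-- Let `α` be a basic `k`-cover of `G` (`k > 0`) and let `r` be the
number of distinct values of `α` which are at most `k/2`.  Then `G` has a free parameter set
of cardinality `r`; in particular `gdim(G) ≥ r + 1`. -/
theorem freeParameterSet_of_basicCover {n k r : ℕ} (G : SimpleGraph (Fin n))
    (hiso : ∀ v : Fin n, ∃ w, G.Adj v w)
    (hk : 0 < k) (α : Fin n → ℕ) (hα : IsBasicCover G k α)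
    (hr : r = Set.ncard {m : ℕ | 2 * m ≤ k ∧ ∃ v : Fin n, α v = m}) :
    HasFreeParameterSet G r ∧ r + 1 ≤ gdim G := by
  have hfree : HasFreeParameterSet G r := by
    set S : Set ℕ := {m : ℕ | 2 * m ≤ k ∧ ∃ v : Fin n, α v = m}
    have hS : S.Finite := (Set.finite_range α).subset fun m hm => hm.2
    have hcard : hS.toFinset.card = r := by rw [hr, Set.ncard_eq_toFinset_card S hS]
    let f := hS.toFinset.orderEmbOfFin hcard
    have hf : ∀ i, f i ∈ S := fun i =>
      hS.mem_toFinset.mp (hS.toFinset.orderEmbOfFin_mem hcard i)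
    choose a ha using fun i : Fin r => (hf i.rev).2
    choose b hadj htight using fun i => hα.exists_tight (hiso (a i))
    refine ⟨a, b, hα.1.isFreeParameterPair ?_ (fun i => ?_) hadj htight⟩
    · intro i j hij
      simpa [ha] using hij
    · rw [ha]
      exact (hf i.rev).1
  exact ⟨hfree, Nat.succ_le_succ (le_csSup (bddAbove_hasFreeParameterSet G) hfree)⟩
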